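/- arXiv:2309.07501 — 3 statements merged into one kernel-verified Lean document; each statement's English description precedes it below -/
import Mathlib

section
/- The fundamental solution S_n of the heat equation, extended by 0 for t ≤ 0, is infinitely differentiable away from the space-time origin: the function S_n is C^∞ on the open set (ℝ × ℝⁿ) \ {(0,0)}. In particular, for every x₀ ≠ 0 it is C^∞ in a neighborhood of the point (0, x₀), across t = 0. -/
/-- The fundamental solution of the heat equation. -/
noncomputable def Sn (n : ℕ) (t : ℝ) (x : EuclideanSpace ℝ (Fin n)) : ℝ :=
  if 0 < t then (4 * Real.pi * t) ^ (-(n : ℝ) / 2) * Real.exp (-‖x‖ ^ 2 / (4 * t)) else 0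

/-!
Away from `t = 0` the kernel is either locally zero or a composition of smooth functions. Away
from `x = 0` it is a smooth function of `‖x‖²` times a function of the single self-similar variable
`s = 4 t / ‖x‖²`, namely `s ^ a * exp (-1 / s)` extended by zero to `s ≤ 0`. Since
`s ^ (-k) * exp (-1 / s)` is smooth for natural `k`, multiplying it by `s ^ (a + k)`, which is
`C^m` as soon as `m ≤ a + k`, shows that this profile is `C^m` for every `m`.
-/

open scoped Topology ContDiff

theorem rpow_mul_expNegInvGlue_eq_rpow_add_mul (a : ℝ) (k : ℕ) (s : ℝ) :
    s ^ a * expNegInvGlue s = s ^ (a + k) * (s⁻¹ ^ k * expNegInvGlue s) := by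
  rcases le_or_gt s 0 with hs | hs
  · simp [expNegInvGlue.zero_of_nonpos hs]
  · rw [Real.rpow_add_natCast hs.ne', inv_pow]
    field_simp

theorem contDiff_rpow_mul_expNegInvGlue {n : ℕ∞} (a : ℝ) :
    ContDiff ℝ n fun s : ℝ => s ^ a * expNegInvGlue s := by
  refine contDiff_all_iff_nat.2 (fun m => ?_) n
  obtain ⟨k, hk⟩ := exists_nat_ge (m - a)
  have h_rpow : ContDiff ℝ m fun s : ℝ => s ^ (a + k) :=
    Real.contDiff_rpow_const_of_le (by linarith)
  have h_glue : ContDiff ℝ m fun s : ℝ => s⁻¹ ^ k * expNegInvGlue s := by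
    simpa using expNegInvGlue.contDiff_polynomial_eval_inv_mul (n := m) (Polynomial.X ^ k)
  simpa only [rpow_mul_expNegInvGlue_eq_rpow_add_mul a k] using h_rpow.mul h_glue

section HeatKernel

variable {E : Type*} [NormedAddCommGroup E]

/-- The Gaussian kernel `(4πt)^a exp(-‖x‖² / (4t))` on a normed group, extended by `0` to `t ≤ 0`.
The exponent `a` of the prefactor is a free parameter; the heat kernel of a Euclidean space of
dimension `n` is the case `a = -n / 2`. -/
noncomputable def heatKernel (a t : ℝ) (x : E) : ℝ :=
  if 0 < t then (4 * Real.pi * t) ^ a * Real.exp (-‖x‖ ^ 2 / (4 * t)) else 0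

theorem heatKernel_of_pos (a : ℝ) {t : ℝ} (ht : 0 < t) (x : E) :
    heatKernel a t x = (4 * Real.pi * t) ^ a * Real.exp (-‖x‖ ^ 2 / (4 * t)) :=
  if_pos ht

theorem heatKernel_of_nonpos (a : ℝ) {t : ℝ} (ht : t ≤ 0) (x : E) : heatKernel a t x = 0 :=
  if_neg ht.not_gt

theorem heatKernel_eq_rpow_mul_expNegInvGlue (a t : ℝ) {x : E} (hx : x ≠ 0) :
    heatKernel a t x = (Real.pi * ‖x‖ ^ 2) ^ a *
      ((4 * t / ‖x‖ ^ 2) ^ a * expNegInvGlue (4 * t / ‖x‖ ^ 2)) := by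
  have hx_sq : 0 < ‖x‖ ^ 2 := pow_pos (norm_pos_iff.2 hx) 2
  rcases le_or_gt t 0 with ht | ht
  · have hs : 4 * t / ‖x‖ ^ 2 ≤ 0 := div_nonpos_of_nonpos_of_nonneg (by linarith) hx_sq.le
    rw [heatKernel_of_nonpos a ht, expNegInvGlue.zero_of_nonpos hs, mul_zero, mul_zero]
  · have hs : 0 < 4 * t / ‖x‖ ^ 2 := by positivity
    have h_prefactor : 4 * Real.pi * t = Real.pi * ‖x‖ ^ 2 * (4 * t / ‖x‖ ^ 2) := by field_simp
    have h_exponent : -‖x‖ ^ 2 / (4 * t) = -(4 * t / ‖x‖ ^ 2)⁻¹ := by rw [inv_div, neg_div]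
    rw [heatKernel_of_pos a ht, expNegInvGlue, if_neg hs.not_ge, h_prefactor, h_exponent,
      Real.mul_rpow (by positivity) hs.le, mul_assoc]

variable [InnerProductSpace ℝ E]

theorem contDiffAt_heatKernel_of_fst_ne_zero (a : ℝ) {p : ℝ × E} (hp : p.1 ≠ 0) :
    ContDiffAt ℝ ∞ (fun q : ℝ × E => heatKernel a q.1 q.2) p := by
  rcases hp.lt_or_gt with ht | ht
  · refine (contDiffAt_const (c := (0 : ℝ))).congr_of_eventuallyEq ?_
    filter_upwards [continuousAt_fst.eventually_lt_const ht] with q hq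
    exact heatKernel_of_nonpos a hq.le q.2
  · have h_prefactor : ContDiffAt ℝ ∞ (fun q : ℝ × E => (4 * Real.pi * q.1) ^ a) p :=
      (contDiffAt_const.mul contDiffAt_fst).rpow_const_of_ne (by positivity)
    have h_exp : ContDiffAt ℝ ∞ (fun q : ℝ × E => Real.exp (-‖q.2‖ ^ 2 / (4 * q.1))) p :=
      ((contDiffAt_snd.norm_sq ℝ).neg.div (contDiffAt_const.mul contDiffAt_fst)
        (by positivity)).exp
    refine (h_prefactor.mul h_exp).congr_of_eventuallyEq ?_
    filter_upwards [continuousAt_fst.eventually_const_lt ht] with q hq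
    exact heatKernel_of_pos a hq q.2

theorem contDiffAt_heatKernel_of_snd_ne_zero (a : ℝ) {p : ℝ × E} (hp : p.2 ≠ 0) :
    ContDiffAt ℝ ∞ (fun q : ℝ × E => heatKernel a q.1 q.2) p := by
  have h_sq_ne : ‖p.2‖ ^ 2 ≠ 0 := pow_ne_zero 2 (norm_ne_zero_iff.2 hp)
  have h_sq : ContDiffAt ℝ ∞ (fun q : ℝ × E => ‖q.2‖ ^ 2) p := contDiffAt_snd.norm_sq ℝ
  have h_prefactor : ContDiffAt ℝ ∞ (fun q : ℝ × E => (Real.pi * ‖q.2‖ ^ 2) ^ a) p :=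
    (contDiffAt_const.mul h_sq).rpow_const_of_ne (mul_ne_zero Real.pi_ne_zero h_sq_ne)
  have h_similarity : ContDiffAt ℝ ∞ (fun q : ℝ × E => 4 * q.1 / ‖q.2‖ ^ 2) p :=
    (contDiffAt_const.mul contDiffAt_fst).div h_sq h_sq_ne
  have h_profile := (contDiff_rpow_mul_expNegInvGlue a).contDiffAt.comp p h_similarity
  refine (h_prefactor.mul h_profile).congr_of_eventuallyEq ?_
  filter_upwards [continuousAt_snd.eventually_ne hp] with q hq
  exact heatKernel_eq_rpow_mul_expNegInvGlue a q.1 hq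

theorem contDiffOn_heatKernel (a : ℝ) :
    ContDiffOn ℝ ∞ (fun p : ℝ × E => heatKernel a p.1 p.2) {p | p ≠ (0, 0)} := by
  intro p hp
  have h_coord : p.1 ≠ 0 ∨ p.2 ≠ 0 := by
    by_contra! h
    exact hp (Prod.ext h.1 h.2)
  rcases h_coord with ht | hx
  · exact (contDiffAt_heatKernel_of_fst_ne_zero a ht).contDiffWithinAt
  · exact (contDiffAt_heatKernel_of_snd_ne_zero a hx).contDiffWithinAt

theorem heat_kernel_smooth_off_origin_general (a : ℝ) :
    ContDiffOn ℝ ∞ (fun p : ℝ × E => heatKernel a p.1 p.2) {p | p ≠ (0, 0)} ∧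
    ∀ x₀ : E, x₀ ≠ 0 →
      ∃ U ∈ 𝓝 ((0 : ℝ), x₀), ContDiffOn ℝ ∞ (fun p : ℝ × E => heatKernel a p.1 p.2) U := by
  refine ⟨contDiffOn_heatKernel a, fun x₀ hx₀ => ⟨{p | p ≠ (0, 0)}, ?_, contDiffOn_heatKernel a⟩⟩
  exact isOpen_ne.mem_nhds fun h => hx₀ (congrArg Prod.snd h)

end HeatKernel

/-- The fundamental solution `S_n`, extended by `0` for `t ≤ 0`, is `C^∞` on
`(ℝ × ℝⁿ) \ {(0,0)}`; in particular, for every `x₀ ≠ 0` it is `C^∞` in a neighborhood of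
`(0, x₀)`, across `t = 0`. -/
theorem heat_kernel_smooth_off_origin (n : ℕ) (hn : 2 ≤ n) :
    ContDiffOn ℝ (⊤ : ℕ∞) (fun p : ℝ × EuclideanSpace ℝ (Fin n) => Sn n p.1 p.2)
      {p : ℝ × EuclideanSpace ℝ (Fin n) | p ≠ (0, 0)} ∧
    ∀ x₀ : EuclideanSpace ℝ (Fin n), x₀ ≠ 0 →
      ∃ U ∈ nhds ((0 : ℝ), x₀),
        ContDiffOn ℝ (⊤ : ℕ∞) (fun p : ℝ × EuclideanSpace ℝ (Fin n) => Sn n p.1 p.2) U :=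
  heat_kernel_smooth_off_origin_general (-(n : ℝ) / 2)
end

section
/- The fundamental solution S_n of the heat equation is not real analytic at points of the hyperplane t = 0: for every x₀ ∈ ℝⁿ with x₀ ≠ 0, the function S_n : ℝ × ℝⁿ → ℝ is not real-analytic at the point (0, x₀). -/
/-! With `x₀` fixed, `t ↦ S_n(t, x₀)` vanishes for `t ≤ 0` but is positive for `t > 0`. By the
identity theorem in one variable, no function analytic at `0` does this. -/

section

open Filter Topology

theorem not_analyticAt_of_frequently_eq_zero_left_ne_zero_right {E : Type*}
    [NormedAddCommGroup E] [NormedSpace ℝ E] {f : ℝ → E} {a : ℝ}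
    (hleft : ∃ᶠ t in 𝓝[<] a, f t = 0) (hright : ∃ᶠ t in 𝓝[>] a, f t ≠ 0) :
    ¬ AnalyticAt ℝ f a := by
  intro hf
  have hzero : ∀ᶠ t in 𝓝 a, f t = 0 :=
    hf.frequently_zero_iff_eventually_zero.mp (hleft.filter_mono (nhdsLT_le_nhdsNE a))
  exact hright (eventually_nhdsWithin_of_eventually_nhds (hzero.mono fun _ ht => not_not.mpr ht))

theorem Sn_eq_zero_of_nonpos {n : ℕ} {t : ℝ} (ht : t ≤ 0) (x : EuclideanSpace ℝ (Fin n)) :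
    Sn n t x = 0 :=
  if_neg ht.not_gt

theorem Sn_pos {n : ℕ} {t : ℝ} (ht : 0 < t) (x : EuclideanSpace ℝ (Fin n)) : 0 < Sn n t x := by
  rw [Sn, if_pos ht]
  positivity

theorem not_analyticAt_Sn_time (n : ℕ) (x : EuclideanSpace ℝ (Fin n)) :
    ¬ AnalyticAt ℝ (fun t => Sn n t x) 0 := by
  have hpast : ∀ᶠ t in 𝓝[<] (0 : ℝ), Sn n t x = 0 :=
    eventually_mem_nhdsWithin.mono fun _ ht => Sn_eq_zero_of_nonpos (le_of_lt ht) x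
  have hfuture : ∀ᶠ t in 𝓝[>] (0 : ℝ), Sn n t x ≠ 0 :=
    eventually_mem_nhdsWithin.mono fun _ ht => (Sn_pos ht x).ne'
  exact not_analyticAt_of_frequently_eq_zero_left_ne_zero_right hpast.frequently
    hfuture.frequently

end

theorem heat_kernel_not_analytic_general (n : ℕ) (x₀ : EuclideanSpace ℝ (Fin n)) :
    ¬ AnalyticAt ℝ (fun p : ℝ × EuclideanSpace ℝ (Fin n) => Sn n p.1 p.2) (0, x₀) :=
  fun h => not_analyticAt_Sn_time n x₀ h.curry_left

/-- The fundamental solution `S_n` of the heat equation is not real analytic at points of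
the hyperplane `t = 0`: for every `x₀ ≠ 0`, the map `(t,x) ↦ S_n(t,x)` is not
real-analytic at `(0, x₀)`. -/
theorem heat_kernel_not_analytic (n : ℕ) (hn : 2 ≤ n)
    (x₀ : EuclideanSpace ℝ (Fin n)) (hx₀ : x₀ ≠ 0) :
    ¬ AnalyticAt ℝ (fun p : ℝ × EuclideanSpace ℝ (Fin n) => Sn n p.1 p.2)
        ((0 : ℝ), x₀) :=
  heat_kernel_not_analytic_general n x₀
end

section
/- Smoothness of an operator-valued map follows from joint smoothness of its evaluation: let E, X, Y be real Banach spaces, let U be an open subset of E, and let G : E → L(X, Y) be a map into the space of continuous linear operators from X to Y (equipped with the operator norm). If the evaluation map (e, x) ↦ G(e)(x) is of class C^∞ on U × X, then G is of class C^∞ on U as a map into L(X, Y). -/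
section

variable {𝕜 E X Y : Type*} [NontriviallyNormedField 𝕜]
  [NormedAddCommGroup E] [NormedSpace 𝕜 E] [NormedAddCommGroup X] [NormedSpace 𝕜 X]
  [NormedAddCommGroup Y] [NormedSpace 𝕜 Y]
  {G : E → X →L[𝕜] Y} {s : Set E} {t : Set X} {m n : WithTop ℕ∞}

-- A continuous linear map is its own derivative, so `G e` is the partial derivative of the
-- evaluation map in the second variable at `(e, x₀)`; taking it costs one order of smoothness.
theorem contDiffWithinAt_clm_of_eval {e₀ : E} {x₀ : X}
    (hG : ContDiffWithinAt 𝕜 n (fun p : E × X => G p.1 p.2) (insert e₀ s ×ˢ t) (e₀, x₀))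
    (hx₀ : x₀ ∈ t) (ht : UniqueDiffWithinAt 𝕜 t x₀) (hmn : m + 1 ≤ n) :
    ContDiffWithinAt 𝕜 m G s e₀ := by
  have hpartial : ContDiffWithinAt 𝕜 m (fun e => fderivWithin 𝕜 (G e) t x₀) s e₀ :=
    hG.fderivWithin' contDiffWithinAt_const (.of_forall fun _ => ht) hmn fun _ _ => hx₀
  simpa only [ContinuousLinearMap.fderivWithin _ ht] using hpartial

theorem smooth_operator_valued_of_smooth_eval_general {x₀ : X}
    (hG : ContDiffOn 𝕜 n (fun p : E × X => G p.1 p.2) (s ×ˢ t))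
    (hx₀ : x₀ ∈ t) (ht : UniqueDiffWithinAt 𝕜 t x₀) (hmn : m + 1 ≤ n) :
    ContDiffOn 𝕜 m G s := by
  intro e he
  refine contDiffWithinAt_clm_of_eval ?_ hx₀ ht hmn
  simpa only [Set.insert_eq_of_mem he] using hG (e, x₀) ⟨he, hx₀⟩

end

/-- Smoothness of an operator-valued map follows from joint smoothness of its evaluation:
if `E, X, Y` are real Banach spaces, `U ⊆ E` is open, `G : E → L(X,Y)`, and the
evaluation map `(e, x) ↦ G(e)(x)` is `C^∞` on `U × X`, then `G` is `C^∞` on `U` as a map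
into `L(X,Y)` with the operator norm. -/
theorem smooth_operator_valued_of_smooth_eval
    {E X Y : Type*}
    [NormedAddCommGroup E] [NormedSpace ℝ E] [CompleteSpace E]
    [NormedAddCommGroup X] [NormedSpace ℝ X] [CompleteSpace X]
    [NormedAddCommGroup Y] [NormedSpace ℝ Y] [CompleteSpace Y]
    (U : Set E) (hU : IsOpen U) (G : E → X →L[ℝ] Y)
    (h : ContDiffOn ℝ (⊤ : ℕ∞) (fun p : E × X => G p.1 p.2)
      (U ×ˢ (Set.univ : Set X))) :
    ContDiffOn ℝ (⊤ : ℕ∞) G U :=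
  smooth_operator_valued_of_smooth_eval_general h (Set.mem_univ 0) uniqueDiffWithinAt_univ le_rfl
end
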